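/- The Basilica generator a has infinite order as a permutation of List Bool: for every natural number n ≠ 0, a ^ n ≠ 1 (equivalently, ¬ IsOfFinOrder a). -/

import Mathlib

/-!
The recursion reads `a = (1, b)` and `b ^ 2 = (a, a)` on the two subtrees below the root, so
`orderOf a = orderOf b` and `orderOf (b ^ 2) = orderOf a`. Since `b` swaps the two vertices of the
first level, `orderOf b` is even and squaring halves it: `orderOf b = orderOf b / 2`, which leaves
only `orderOf b = 0`, Mathlib's value for an element of infinite order.
-/

namespace Basilica

mutual
  /-- Underlying map of the Basilica generator `a`. -/
  def aF : List Bool → List Bool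
    | [] => []
    | false :: w => false :: w
    | true :: w => true :: bF w
  /-- Underlying map of the Basilica generator `b`. -/
  def bF : List Bool → List Bool
    | [] => []
    | false :: w => true :: w
    | true :: w => false :: aF w
end

mutual
  /-- Inverse of `aF`. -/
  def aI : List Bool → List Bool
    | [] => []
    | false :: w => false :: w
    | true :: w => true :: bI w
  /-- Inverse of `bF`. -/
  def bI : List Bool → List Bool
    | [] => []
    | false :: w => true :: aI w
    | true :: w => false :: w
end

theorem basilica_inv : ∀ w : List Bool,
    aI (aF w) = w ∧ bI (bF w) = w ∧ aF (aI w) = w ∧ bF (bI w) = w := by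
  intro w
  induction w with
  | nil => simp [aF, bF, aI, bI]
  | cons x w ih =>
    cases x <;>
      simp [aF, bF, aI, bI, ih.1, ih.2.1, ih.2.2.1, ih.2.2.2]

/-- The Basilica generator `a` as a permutation of the binary tree `List Bool`:
`a [] = []`, `a (false :: w) = false :: w`, `a (true :: w) = true :: b w`. -/
def a : Equiv.Perm (List Bool) :=
  ⟨aF, aI, fun w => (basilica_inv w).1, fun w => (basilica_inv w).2.2.1⟩

/-- The Basilica generator `b` as a permutation of the binary tree `List Bool`:
`b [] = []`, `b (false :: w) = true :: w`, `b (true :: w) = false :: a w`. -/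
def b : Equiv.Perm (List Bool) :=
  ⟨bF, bI, fun w => (basilica_inv w).2.1, fun w => (basilica_inv w).2.2.2⟩

/-- Underlying map of the pair `(g, h)` acting on the two subtrees. -/
def pairF (g h : List Bool → List Bool) : List Bool → List Bool
  | [] => []
  | false :: w => false :: g w
  | true :: w => true :: h w

/-- The permutation of `List Bool` acting as `g` on the subtree below `false`
and as `h` on the subtree below `true`, fixing the root. -/
def pair (g h : Equiv.Perm (List Bool)) : Equiv.Perm (List Bool) :=
  ⟨pairF g h, pairF g.symm h.symm,
    fun w => by cases w with
      | nil => rfl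
      | cons x w => cases x <;> simp [pairF],
    fun w => by cases w with
      | nil => rfl
      | cons x w => cases x <;> simp [pairF]⟩

/-- The Basilica group: the subgroup of `Equiv.Perm (List Bool)` generated by `a` and `b`. -/
def B : Subgroup (Equiv.Perm (List Bool)) := Subgroup.closure {a, b}

end Basilica

theorem prime_dvd_orderOf_of_pow_smul_eq {M α : Type*} [Monoid M] [MulAction M α] {p : ℕ}
    (hp : p.Prime) {g : M} {x : α} (hpow : g ^ p • x = x) (hmove : g • x ≠ x) :
    p ∣ orderOf g := by
  have hperiod : MulAction.period g x = p :=
    (hp.eq_one_or_self_of_dvd _ (MulAction.pow_smul_eq_iff_period_dvd.mp hpow)).resolve_left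
      (mt MulAction.period_eq_one_iff.mp hmove)
  exact hperiod ▸ MulAction.period_dvd_orderOf g x

namespace Basilica

/-- `pair` as a group homomorphism: the embedding of two copies of the permutation group of the
tree as the permutations acting independently on the two subtrees below the root. -/
def pairHom :
    Equiv.Perm (List Bool) × Equiv.Perm (List Bool) →* Equiv.Perm (List Bool) where
  toFun gh := pair gh.1 gh.2
  map_one' := by ext1 (_ | ⟨_ | _, _⟩) <;> rfl
  map_mul' _ _ := by ext1 (_ | ⟨_ | _, _⟩) <;> rfl

theorem pairHom_injective : Function.Injective pairHom := by
  rintro ⟨g, h⟩ ⟨g', h'⟩ heq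
  have hfalse (w : List Bool) : g w = g' w :=
    List.tail_eq_of_cons_eq (DFunLike.congr_fun heq (false :: w))
  have htrue (w : List Bool) : h w = h' w :=
    List.tail_eq_of_cons_eq (DFunLike.congr_fun heq (true :: w))
  exact Prod.ext (Equiv.ext hfalse) (Equiv.ext htrue)

theorem orderOf_pair (g h : Equiv.Perm (List Bool)) :
    orderOf (pair g h) = (orderOf g).lcm (orderOf h) :=
  (orderOf_injective pairHom pairHom_injective (g, h)).trans Prod.orderOf_mk

theorem a_eq_pair : a = pair 1 b := by
  ext1 (_ | ⟨_ | _, _⟩) <;> rfl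

theorem b_sq_eq_pair : b ^ 2 = pair a a := by
  ext1 (_ | ⟨_ | _, _⟩) <;> rfl

theorem orderOf_a_eq_orderOf_b : orderOf a = orderOf b := by
  rw [a_eq_pair, orderOf_pair, orderOf_one, Nat.lcm_one_left]

theorem orderOf_b_sq : orderOf (b ^ 2) = orderOf a := by
  rw [b_sq_eq_pair, orderOf_pair, Nat.lcm_self]

theorem two_dvd_orderOf_b : 2 ∣ orderOf b := by
  have hmove : b • [false] ≠ [false] := by decide
  have hsq : b ^ 2 • [false] = [false] := rfl
  exact prime_dvd_orderOf_of_pow_smul_eq Nat.prime_two hsq hmove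

theorem orderOf_b_eq_zero : orderOf b = 0 := by
  have hhalf : orderOf b = orderOf b / 2 :=
    calc orderOf b = orderOf (b ^ 2) := by rw [orderOf_b_sq, orderOf_a_eq_orderOf_b]
      _ = orderOf b / 2 := orderOf_pow_of_dvd two_ne_zero two_dvd_orderOf_b
  lia

end Basilica

open Basilica in
/-- The Basilica generator `a` has infinite order: `a ^ n ≠ 1` for all `n ≠ 0`;
equivalently, `a` is not of finite order. -/
theorem basilica_a_infinite_order :
    (∀ n : ℕ, n ≠ 0 → a ^ n ≠ 1) ∧ ¬ IsOfFinOrder a := by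
  have ha : ¬ IsOfFinOrder a :=
    orderOf_eq_zero_iff.mp (orderOf_a_eq_orderOf_b.trans orderOf_b_eq_zero)
  exact ⟨fun n hn hpow => ha (isOfFinOrder_iff_pow_eq_one.mpr ⟨n, Nat.pos_of_ne_zero hn, hpow⟩), ha⟩
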